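/- Let n ≥ 5 be an integer and let p : ℤ/nℤ → ℝ satisfy p_i ≠ 0 for all i. Define x_i = (1 − p_i)/p_{i+1} and y_i = (1 − p_{i+1})/p_i for all i ∈ ℤ/nℤ. Then for every k with 1 ≤ k ≤ ⌊n/2⌋ one has O_k(x, y) = E_k(x, y). (This is the main theorem: for a twisted n-gon inscribed in a conic, parametrized by the cross-ratio coordinates p_i, the even and odd pentagram monodromy invariants coincide.) -/

import Mathlib

/-!
Monodromy invariants `O_k`, `E_k` of the pentagram map (combinatorial definition),
and the main theorem: for a twisted `n`-gon inscribed in a conic, parametrized by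
the cross-ratio coordinates `p_i`, one has `O_k = E_k` for `1 ≤ k ≤ ⌊n/2⌋`.

Two monomials are *consecutive* if they involve consecutive or coinciding variables.
For the `O`-side monomials `x_i` and `X_i = x_i y_i x_{i+1}` this gives:
`X_i, X_j` consecutive iff `j ∈ {i-2,…,i+2}`; `X_i, x_j` consecutive iff
`j ∈ {i-1,…,i+2}`; `x_i, x_j` consecutive iff `j ∈ {i-1,i,i+1}`.
For the `E`-side monomials `y_i` and `Y_j = y_{j-1} x_j y_j` (so `Y_j` involves the
variables `y_{j-1}, y_j`) the same notion gives: `Y_i, Y_j` consecutive iff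
`j ∈ {i-2,…,i+2}`; `Y_i, y_j` consecutive iff `j ∈ {i-2,…,i+1}`; `y_i, y_j`
consecutive iff `j ∈ {i-1,i,i+1}`.
-/

open scoped Classical

noncomputable section

/-- The monomial `X_i = x_i · y_i · x_{i+1}`. -/
def Xmon {R : Type*} [CommRing R] {n : ℕ} (x y : ZMod n → R) (i : ZMod n) : R :=
  x i * y i * x (i + 1)

/-- The monomial `Y_j = y_{j-1} · x_j · y_j`. -/
def Ymon {R : Type*} [CommRing R] {n : ℕ} (x y : ZMod n → R) (j : ZMod n) : R :=
  y (j - 1) * x j * y j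

/-- Admissibility of a product of the monomials `X_i` (`i ∈ S`) and `x_j` (`j ∈ T`):
no two of the factors are consecutive. -/
def AdmissibleO {n : ℕ} (S T : Finset (ZMod n)) : Prop :=
  (∀ i ∈ S, ∀ j ∈ S, i ≠ j → j ∉ ({i - 2, i - 1, i, i + 1, i + 2} : Finset (ZMod n))) ∧
  (∀ i ∈ S, ∀ j ∈ T, j ∉ ({i - 1, i, i + 1, i + 2} : Finset (ZMod n))) ∧
  (∀ i ∈ T, ∀ j ∈ T, i ≠ j → j ∉ ({i - 1, i, i + 1} : Finset (ZMod n)))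

/-- Admissibility of a product of the monomials `Y_i` (`i ∈ S`) and `y_j` (`j ∈ T`):
no two of the factors are consecutive (`Y_i` involves the variables `y_{i-1}, y_i`). -/
def AdmissibleE {n : ℕ} (S T : Finset (ZMod n)) : Prop :=
  (∀ i ∈ S, ∀ j ∈ S, i ≠ j → j ∉ ({i - 2, i - 1, i, i + 1, i + 2} : Finset (ZMod n))) ∧
  (∀ i ∈ S, ∀ j ∈ T, j ∉ ({i - 2, i - 1, i, i + 1} : Finset (ZMod n))) ∧
  (∀ i ∈ T, ∀ j ∈ T, i ≠ j → j ∉ ({i - 1, i, i + 1} : Finset (ZMod n)))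

/-- The finset of all residues mod `n` (for `n ≥ 1`). -/
def allRes (n : ℕ) : Finset (ZMod n) := (Finset.range n).image (Nat.cast)

/-- The monodromy invariant `O_k = ∑_{|O|=k} sign(O)·O`, the sum over all admissible
products `O = X_{i_1}⋯X_{i_s}·x_{j_1}⋯x_{j_t}` of weight `s + t = k`, with
sign `(-1)^s`. -/
def Opoly {R : Type*} [CommRing R] {n : ℕ} (x y : ZMod n → R) (k : ℕ) : R :=
  ∑ S ∈ (allRes n).powerset, ∑ T ∈ (allRes n).powerset,
    if AdmissibleO S T ∧ S.card + T.card = k then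
      (-1 : R) ^ S.card * (∏ i ∈ S, Xmon x y i) * ∏ j ∈ T, x j
    else 0

/-- The monodromy invariant `E_k`, built from the monomials `Y_i` and `y_j` by the
same recipe. -/
def Epoly {R : Type*} [CommRing R] {n : ℕ} (x y : ZMod n → R) (k : ℕ) : R :=
  ∑ S ∈ (allRes n).powerset, ∑ T ∈ (allRes n).powerset,
    if AdmissibleE S T ∧ S.card + T.card = k then
      (-1 : R) ^ S.card * (∏ i ∈ S, Ymon x y i) * ∏ j ∈ T, y j
    else 0

/-!
Put `q = 1 - p` and let `t` mark the weight, so that `x_i` becomes `t x_i` and `X_i` becomes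
`-t X_i`. Since `x_i = q_i / p_{i+1}` and `X_i = q_i q_{i+1}² / (p_i p_{i+1} p_{i+2})`, multiplying
`∑ O_k t^k` by `∏ p_i` turns it into a sum over tilings of the cycle by monomers of weight
`p_i = 1 - q_i`, dimers of weight `t q_i p_i = t q_i - t q_i²` and trimers of weight
`-t q_i q_{i+1}²`. Expand the monomers and the dimers. A trimer cancels a monomer contributing
`-q_i` followed by a dimer contributing `-t q_{i+1}²`, so no such pair survives. What is left
consists of isolated sites, of weight `-t q_i²`, and of runs of sites of weight `-q_i` in which the
last site may come from a dimer `t q_i` instead, giving a factor `1 - t` per run that has a last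
site. This description does not distinguish the two orientations of the cycle, while reversing the
orientation exchanges `O_k` and `E_k`.
-/

open Finset Polynomial

section Subsets

variable {α M : Type*} [Fintype α] [DecidableEq α] [AddCommMonoid M]

lemma sum_ite_disjoint_union (Z : Finset α) (f : Finset α → M) :
    (∑ X, if Disjoint X Z then f (X ∪ Z) else 0) = ∑ X, if Z ⊆ X then f X else 0 := by
  simp only [← sum_filter]
  refine sum_nbij' (· ∪ Z) (· \ Z) ?_ ?_ ?_ ?_ fun _ _ => rfl
  · simp
  · simp [sdiff_disjoint]
  · simp +contextual [union_sdiff_cancel_right]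
  · simp +contextual

lemma sum_sum_powerset_sdiff (f : Finset α → Finset α → M) :
    ∑ T, ∑ D ∈ T.powerset, f (T \ D) D = ∑ C, ∑ D, if Disjoint C D then f C D else 0 := by
  simp only [← filter_subset_univ, sum_filter]
  rw [sum_comm, sum_comm (f := fun C D => if Disjoint C D then f C D else 0)]
  refine sum_congr rfl fun D _ => ?_
  rw [← sum_ite_disjoint_union D fun T => f (T \ D) D]
  refine sum_congr rfl fun C _ => ?_
  split_ifs with h
  · rw [union_sdiff_cancel_right h]
  · rfl

lemma sum_ite_prod_add_mul_prod_one_add {R : Type*} [CommSemiring R] (P : Finset α → Prop)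
    (V : Finset α → Finset α) (u c d : α → R) :
    (∑ T, if P T then (∏ i ∈ T, (c i + d i)) * ∏ i ∈ V T, (1 + u i) else 0) =
      ∑ B, ∑ D, ∑ C, if Disjoint C D ∧ P (C ∪ D) ∧ B ⊆ V (C ∪ D) then
        (∏ i ∈ B, u i) * (∏ i ∈ C, c i) * ∏ i ∈ D, d i else 0 := by
  calc
    _ = ∑ T, ∑ D ∈ T.powerset, if P (T \ D ∪ D) then ∑ B, if B ⊆ V (T \ D ∪ D) then
        (∏ i ∈ B, u i) * (∏ i ∈ T \ D, c i) * ∏ i ∈ D, d i else 0 else 0 := by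
      refine sum_congr rfl fun T _ => ?_
      rw [prod_one_add]
      simp only [add_comm (c _), prod_add, sum_mul, ite_sum_zero]
      refine sum_congr rfl fun D hD => ?_
      rw [sdiff_union_of_subset (mem_powerset.1 hD), ← filter_subset_univ (V T), sum_filter]
      simp only [mul_sum, ite_sum_zero, mul_ite_zero]
      simp only [mul_comm, mul_left_comm]
    _ = ∑ C, ∑ D, ∑ B, if Disjoint C D ∧ P (C ∪ D) ∧ B ⊆ V (C ∪ D) then
        (∏ i ∈ B, u i) * (∏ i ∈ C, c i) * ∏ i ∈ D, d i else 0 := by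
      rw [sum_sum_powerset_sdiff fun C D => if P (C ∪ D) then ∑ B, if B ⊆ V (C ∪ D) then
        (∏ i ∈ B, u i) * (∏ i ∈ C, c i) * ∏ i ∈ D, d i else 0 else 0]
      simp only [ite_and, sum_ite_irrel, sum_const_zero]
    _ = _ :=
      (sum_congr rfl fun C _ => sum_comm).trans <| sum_comm.trans <|
        sum_congr rfl fun B _ => sum_comm

end Subsets

section Packings

variable {α : Type*}

/-- The trimers `{i, σ i, σ (σ i)}` for `i ∈ S` and the dimers `{j, σ j}` for `j ∈ T` are pairwise
disjoint. With `σ i = i + 1` these are the sets of indices of the `p`'s in the denominators of the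
monomials `X_i` and `x_j`, so that packings are the admissible products. -/
def IsPacking (σ : Equiv.Perm α) (S T : Finset α) : Prop :=
  (∀ i ∈ S, σ i ∉ S ∧ σ (σ i) ∉ S ∧ i ∉ T ∧ σ i ∉ T ∧ σ (σ i) ∉ T) ∧
    ∀ i ∈ T, σ i ∉ S ∧ σ i ∉ T

variable [DecidableEq α]

lemma isPacking_iff_forall_notMem {σ : Equiv.Perm α}
    (h₁ : ∀ i, σ i ≠ i) (h₂ : ∀ i, σ (σ i) ≠ i) {S T : Finset α} :
    IsPacking σ S T ↔
      (∀ i ∈ S, ∀ j ∈ S, i ≠ j →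
        j ∉ ({σ.symm (σ.symm i), σ.symm i, i, σ i, σ (σ i)} : Finset α)) ∧
      (∀ i ∈ S, ∀ j ∈ T, j ∉ ({σ.symm i, i, σ i, σ (σ i)} : Finset α)) ∧
      ∀ i ∈ T, ∀ j ∈ T, i ≠ j → j ∉ ({σ.symm i, i, σ i} : Finset α) := by
  have apply_symm i : σ (σ.symm i) = i := σ.apply_symm_apply i
  simp only [IsPacking, mem_insert, mem_singleton]
  constructor
  · rintro ⟨hS, hT⟩
    refine ⟨?_, ?_, ?_⟩ <;> grind
  · rintro ⟨hSS, hST, hTT⟩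
    refine ⟨?_, ?_⟩ <;> grind

/-- A partial labelling of the sites by three labels, carried by `B`, `C` and `D`, in which the
second and third labels are followed along `σ` by an unlabelled site. It records the choices made
when a monomer is expanded as `1 + u` (unlabelled or in `B`) and a dimer as `c + d` (first site in
`C` or `D`, second site unlabelled). -/
def IsLabelling (σ : Equiv.Perm α) (B C D : Finset α) : Prop :=
  Disjoint B C ∧ Disjoint (B ∪ C) D ∧ ∀ i ∈ C ∪ D, σ i ∉ B ∪ C ∪ D

/-- The sites of `D` are neither equal nor adjacent along `σ` to a site of `U`, nor adjacent to each
other. -/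
def IsIsolated (σ : Equiv.Perm α) (U D : Finset α) : Prop :=
  Disjoint U D ∧ (∀ i ∈ U, σ i ∉ D) ∧ ∀ i ∈ D, σ i ∉ U ∪ D

/-- The last sites of the runs (maximal intervals along `σ`) of `U`; they count the runs that do not
close up to a whole cycle. -/
def runEnds (σ : Equiv.Perm α) (U : Finset α) : Finset α := {i ∈ U | σ i ∉ U}

lemma isLabelling_and_iff {σ : Equiv.Perm α} {B C D : Finset α} :
    (IsLabelling σ B C D ∧ ∀ i ∈ B, σ i ∉ D) ↔
      Disjoint B C ∧ IsIsolated σ (B ∪ C) D ∧ C ⊆ runEnds σ (B ∪ C) := by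
  simp only [IsLabelling, IsIsolated, runEnds, disjoint_left, subset_iff, mem_filter, mem_union]
  grind

lemma isIsolated_symm {σ : Equiv.Perm α} {U D : Finset α} :
    IsIsolated σ.symm U D ↔ IsIsolated σ U D := by
  have forall_symm_notMem (X Y : Finset α) : (∀ i ∈ X, σ.symm i ∉ Y) ↔ ∀ i ∈ Y, σ i ∉ X :=
    ⟨fun h i hi hi' => h _ hi' (by simpa), fun h i hi hi' => h _ hi' (by simpa)⟩
  simp only [IsIsolated, mem_union, not_or, imp_and, forall_and, forall_symm_notMem]
  tauto

lemma isIsolated_map {σ : Equiv.Perm α} {U D : Finset α} :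
    IsIsolated σ (U.map σ.toEmbedding) (D.map σ.toEmbedding) ↔ IsIsolated σ U D := by
  simp only [IsIsolated, disjoint_map, ← map_union, forall_mem_map]
  simp only [mem_map_equiv, Equiv.coe_toEmbedding, Equiv.symm_apply_apply]

lemma card_runEnds_map (σ : Equiv.Perm α) (U : Finset α) :
    #(runEnds σ (U.map σ.toEmbedding)) = #(runEnds σ U) := by
  simp [runEnds, filter_map]

lemma card_runEnds_symm (σ : Equiv.Perm α) (U : Finset α) :
    #(runEnds σ.symm U) = #(runEnds σ U) := by
  have card_eq : #{i ∈ U | σ.symm i ∈ U} = #{i ∈ U | σ i ∈ U} :=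
    card_nbij' σ.symm σ (by simp +contextual [Set.MapsTo]) (by simp +contextual [Set.MapsTo])
      (by simp [Set.LeftInvOn]) (by simp [Set.RightInvOn, Set.LeftInvOn])
  have h₁ := card_filter_add_card_filter_not (s := U) (σ.symm · ∈ U)
  have h₂ := card_filter_add_card_filter_not (s := U) (σ · ∈ U)
  simp only [runEnds]
  lia

variable [Fintype α]

/-- The sites left free by the trimers at `S` and the dimers at `T`, that is, the monomers. -/
def uncovered (σ : Equiv.Perm α) (S T : Finset α) : Finset α :=
  (S ∪ S.map σ.toEmbedding ∪ (S.map σ.toEmbedding).map σ.toEmbedding ∪ T ∪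
    T.map σ.toEmbedding)ᶜ

-- A trimer at `i` is read as the label of `B` at `i` followed by the label of `D` at `σ i`.
lemma isPacking_and_iff {σ : Equiv.Perm α} {S B C D : Finset α} :
    (Disjoint C D ∧ IsPacking σ S (C ∪ D) ∧ B ⊆ uncovered σ S (C ∪ D)) ↔
      Disjoint B S ∧ Disjoint D (S.map σ.toEmbedding) ∧
        IsLabelling σ (B ∪ S) C (D ∪ S.map σ.toEmbedding) := by
  have apply_symm i : σ (σ.symm i) = i := σ.apply_symm_apply i
  have symm_apply i : σ.symm (σ i) = i := σ.symm_apply_apply i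
  simp only [IsPacking, IsLabelling, uncovered, disjoint_left, subset_iff, mem_compl, mem_union,
    mem_map_equiv]
  constructor
  · grind (splits := 40)
  · grind (splits := 40)

lemma prod_univ_eq_of_isPacking {M : Type*} [CommMonoid M] {σ : Equiv.Perm α}
    {S T : Finset α} (h : IsPacking σ S T) (p : α → M) :
    ∏ i, p i = (∏ i ∈ S, p i * p (σ i) * p (σ (σ i))) * (∏ i ∈ T, p i * p (σ i)) *
      ∏ i ∈ uncovered σ S T, p i := by
  obtain ⟨hS, hT⟩ := h
  have apply_symm i : σ (σ.symm i) = i := σ.apply_symm_apply i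
  have h₁ : Disjoint S (S.map σ.toEmbedding) := by
    simp only [disjoint_left, mem_map_equiv]
    grind
  have h₂ : Disjoint (S ∪ S.map σ.toEmbedding) ((S.map σ.toEmbedding).map σ.toEmbedding) := by
    simp only [disjoint_right, mem_union, mem_map_equiv]
    grind
  have h₃ : Disjoint (S ∪ S.map σ.toEmbedding ∪ (S.map σ.toEmbedding).map σ.toEmbedding) T := by
    simp only [disjoint_left, mem_union, mem_map_equiv]
    grind
  have h₄ : Disjoint (S ∪ S.map σ.toEmbedding ∪ (S.map σ.toEmbedding).map σ.toEmbedding ∪ T)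
      (T.map σ.toEmbedding) := by
    simp only [disjoint_right, mem_union, mem_map_equiv]
    grind
  rw [uncovered, ← prod_mul_prod_compl, prod_union h₄, prod_union h₃, prod_union h₂,
    prod_union h₁]
  simp only [prod_map, prod_mul_distrib, Equiv.coe_toEmbedding, mul_assoc]

end Packings

section WeightedSums

variable {α R : Type*} [Fintype α] [CommRing R]

/-- The generating function of packings by trimers of weight `-t X_i` and dimers of weight `t x_i`,
where `X_i = x_i y_i x_{σ i}`. For `σ i = i + 1` the coefficient of `t ^ k` is the monodromy
invariant `O_k`. -/
def packingSum (σ : Equiv.Perm α) (t : R) (x y : α → R) : R :=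
  ∑ S, ∑ T, if IsPacking σ S T then
    (∏ i ∈ S, -(t * (x i * y i * x (σ i)))) * ∏ i ∈ T, t * x i else 0

lemma coeff_packingSum (σ : Equiv.Perm α) (x y : α → R) (k : ℕ) :
    (packingSum σ X (C ∘ x) (C ∘ y)).coeff k =
      ∑ S, ∑ T, if IsPacking σ S T ∧ #S + #T = k then
        (-1) ^ #S * (∏ i ∈ S, x i * y i * x (σ i)) * ∏ i ∈ T, x i else 0 := by
  have monomial_eq (S T : Finset α) :
      (∏ i ∈ S, -(X * (C (x i) * C (y i) * C (x (σ i))))) * ∏ i ∈ T, X * C (x i) =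
        C ((-1) ^ #S * (∏ i ∈ S, x i * y i * x (σ i)) * ∏ i ∈ T, x i) * X ^ (#S + #T) := by
    simp only [prod_neg, prod_mul_distrib, prod_const, map_mul, map_prod, map_pow, map_neg, map_one]
    ring
  simp only [packingSum, Function.comp_apply, monomial_eq, finsetSum_coeff, apply_ite (coeff · k),
    coeff_C_mul_X_pow, coeff_zero, ite_and, eq_comm (a := k)]

section

variable [DecidableEq α]

/-- The sum over unions of runs `U` and sets `D` of isolated sites, with a weight `u i` for each
site of `U`, `d i` for each site of `D`, and a factor `1 - t` for each run that has a last site. -/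
def runSum (σ : Equiv.Perm α) (t : R) (u d : α → R) : R :=
  ∑ U, ∑ D, if IsIsolated σ U D then
    (1 - t) ^ #(runEnds σ U) * (∏ i ∈ U, u i) * ∏ i ∈ D, d i else 0

lemma runSum_symm (σ : Equiv.Perm α) (t : R) (u d : α → R) :
    runSum σ.symm t u d = runSum σ t u d := by
  simp only [runSum, isIsolated_symm, card_runEnds_symm]

lemma runSum_comp (σ : Equiv.Perm α) (t : R) (u d : α → R) :
    runSum σ t (u ∘ σ) (d ∘ σ) = runSum σ t u d := by
  refine Fintype.sum_equiv σ.finsetCongr _ _ fun U =>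
    Fintype.sum_equiv σ.finsetCongr _ _ fun D => ?_
  simp only [Equiv.finsetCongr_apply, isIsolated_map, card_runEnds_map, prod_map,
    Equiv.coe_toEmbedding, Function.comp_apply]

lemma sum_neg_one_pow_card_eq_ite (σ : Equiv.Perm α) (B D : Finset α) :
    (∑ S, if S ⊆ B ∧ S.map σ.toEmbedding ⊆ D then (-1 : R) ^ #S else 0) =
      if ∀ i ∈ B, σ i ∉ D then 1 else 0 := by
  have hfilter : (univ.filter fun S : Finset α => S ⊆ B ∧ S.map σ.toEmbedding ⊆ D) =
      {i ∈ B | σ i ∈ D}.powerset := by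
    ext S
    simp only [mem_filter, mem_univ, true_and, mem_powerset, subset_iff, forall_mem_map,
      ← forall_and, Equiv.coe_toEmbedding]
  have hempty : (∀ i ∈ B, σ i ∉ D) ↔ {i ∈ B | σ i ∈ D} = ∅ := filter_eq_empty_iff.symm
  simp only [← sum_filter, hfilter, hempty]
  exact_mod_cast congrArg (Int.cast : ℤ → R) sum_powerset_neg_one_pow_card

lemma sum_neg_one_pow_mul_sum_disjoint_union (σ : Equiv.Perm α)
    (f : Finset α → Finset α → R) :
    (∑ S, (-1) ^ #S * ∑ B, ∑ D, if Disjoint B S ∧ Disjoint D (S.map σ.toEmbedding) then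
      f (B ∪ S) (D ∪ S.map σ.toEmbedding) else 0) =
    ∑ B, ∑ D, if ∀ i ∈ B, σ i ∉ D then f B D else 0 := by
  calc
    _ = ∑ S, (-1) ^ #S * ∑ B, ∑ D, if S ⊆ B ∧ S.map σ.toEmbedding ⊆ D then f B D else 0 := by
      refine sum_congr rfl fun S _ => congrArg _ ?_
      simp only [ite_and, sum_ite_irrel, sum_const_zero]
      rw [← sum_ite_disjoint_union S fun B =>
        ∑ D, if S.map σ.toEmbedding ⊆ D then f B D else 0]
      simp only [sum_ite_disjoint_union (S.map σ.toEmbedding) (f _)]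
    _ = ∑ B, ∑ D, (∑ S, if S ⊆ B ∧ S.map σ.toEmbedding ⊆ D then (-1) ^ #S else 0) * f B D := by
      simp only [mul_sum, sum_mul]
      rw [sum_comm]
      refine sum_congr rfl fun B _ => ?_
      rw [sum_comm]
      simp only [mul_ite_zero, ite_zero_mul]
    _ = _ := by
      simp only [sum_neg_one_pow_card_eq_ite, ite_mul, one_mul, zero_mul]

theorem sum_isPacking_eq_sum_isLabelling (σ : Equiv.Perm α) (u c d : α → R) :
    (∑ S, (∏ i ∈ S, -(u i * d (σ i))) * ∑ T, if IsPacking σ S T then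
      (∏ i ∈ T, (c i + d i)) * ∏ i ∈ uncovered σ S T, (1 + u i) else 0) =
    ∑ B, ∑ D, ∑ C, if IsLabelling σ B C D ∧ ∀ i ∈ B, σ i ∉ D then
      (∏ i ∈ B, u i) * (∏ i ∈ C, c i) * ∏ i ∈ D, d i else 0 := by
  simp only [and_comm (a := IsLabelling _ _ _ _), ite_and, sum_ite_irrel, sum_const_zero]
  rw [← sum_neg_one_pow_mul_sum_disjoint_union σ fun B D =>
    ∑ C, if IsLabelling σ B C D then (∏ i ∈ B, u i) * (∏ i ∈ C, c i) * ∏ i ∈ D, d i else 0]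
  refine sum_congr rfl fun S _ => ?_
  rw [sum_ite_prod_add_mul_prod_one_add]
  simp only [mul_sum, ite_sum_zero]
  refine sum_congr rfl fun B _ => sum_congr rfl fun D _ => sum_congr rfl fun C _ => ?_
  simp only [isPacking_and_iff, ite_and, mul_ite_zero]
  split_ifs with hB hD
  · rw [prod_union hB, prod_union hD, prod_map, prod_neg, prod_mul_distrib]
    simp only [Equiv.coe_toEmbedding]
    ring
  all_goals rfl

lemma sum_isLabelling_eq_runSum (σ : Equiv.Perm α) (t : R) (u d : α → R) :
    (∑ B, ∑ D, ∑ C, if IsLabelling σ B C D ∧ ∀ i ∈ B, σ i ∉ D then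
      (∏ i ∈ B, u i) * (∏ i ∈ C, -(t * u i)) * ∏ i ∈ D, d i else 0) = runSum σ t u d := by
  have sum_runEnds (U : Finset α) :
      (1 - t) ^ #(runEnds σ U) = ∑ C, if C ⊆ runEnds σ U then (-t) ^ #C else 0 := by
    rw [← sum_filter, filter_subset_univ, ← prod_const, sub_eq_add_neg, prod_one_add]
    simp only [prod_const]
  calc
    _ = ∑ D, ∑ C, ∑ B, if Disjoint B C then if IsIsolated σ (B ∪ C) D then
        if C ⊆ runEnds σ (B ∪ C) then (-t) ^ #C * (∏ i ∈ B ∪ C, u i) * ∏ i ∈ D, d i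
        else 0 else 0 else 0 := by
      rw [sum_comm]
      refine sum_congr rfl fun D _ => sum_comm.trans ?_
      refine sum_congr rfl fun C _ => sum_congr rfl fun B _ => ?_
      simp only [isLabelling_and_iff, ite_and]
      split_ifs with h
      · rw [prod_union h, prod_neg, prod_mul_distrib, prod_const, neg_pow t]
        ring
      all_goals rfl
    _ = ∑ D, ∑ U : Finset α, ∑ C, if C ⊆ U then if IsIsolated σ U D then
        if C ⊆ runEnds σ U then (-t) ^ #C * (∏ i ∈ U, u i) * ∏ i ∈ D, d i
        else 0 else 0 else 0 := by
      refine sum_congr rfl fun D _ => Eq.trans ?_ sum_comm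
      refine sum_congr rfl fun C _ => ?_
      exact sum_ite_disjoint_union C fun U => if IsIsolated σ U D then
        if C ⊆ runEnds σ U then (-t) ^ #C * (∏ i ∈ U, u i) * ∏ i ∈ D, d i else 0 else 0
    _ = _ := by
      rw [sum_comm]
      refine sum_congr rfl fun U _ => sum_congr rfl fun D _ => ?_
      rw [sum_runEnds, sum_mul, sum_mul, ite_sum_zero]
      refine sum_congr rfl fun C _ => ?_
      have : C ⊆ runEnds σ U → C ⊆ U := fun h => h.trans (filter_subset _ _)
      split_ifs <;> simp_all

theorem prod_mul_packingSum {σ : Equiv.Perm α} {p x y : α → R}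
    (hx : ∀ i, x i * p (σ i) = 1 - p i) (hy : ∀ i, y i * p i = 1 - p (σ i)) (t : R) :
    (∏ i, p i) * packingSum σ t x y =
      runSum σ t (fun i => p i - 1) (fun i => -(t * (1 - p i) ^ 2)) := by
  rw [← sum_isLabelling_eq_runSum, ← sum_isPacking_eq_sum_isLabelling, packingSum, mul_sum]
  refine sum_congr rfl fun S _ => ?_
  rw [mul_sum, mul_sum]
  refine sum_congr rfl fun T _ => ?_
  split_ifs with h
  · have trimer i : p i * p (σ i) * p (σ (σ i)) * -(t * (x i * y i * x (σ i))) =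
        -((p i - 1) * -(t * (1 - p (σ i)) ^ 2)) := by
      calc
        _ = -(t * ((x i * p (σ i)) * (y i * p i) * (x (σ i) * p (σ (σ i))))) := by ring
        _ = _ := by
          rw [hx, hy, hx]
          ring
    have dimer i : p i * p (σ i) * (t * x i) = -(t * (p i - 1)) + -(t * (1 - p i) ^ 2) := by
      linear_combination t * p i * hx i
    simp only [prod_univ_eq_of_isPacking h, add_sub_cancel, ← trimer, ← dimer, prod_mul_distrib]
    ring
  · simp only [mul_zero]

end

lemma prod_mul_packingSum_symm {σ : Equiv.Perm α} {p x y : α → R}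
    (hx : ∀ i, x i * p (σ i) = 1 - p i) (hy : ∀ i, y i * p i = 1 - p (σ i)) (t : R) :
    (∏ i, p i) * packingSum σ.symm t y x = (∏ i, p i) * packingSum σ t x y := by
  have hy' i : y i * (p ∘ σ) (σ.symm i) = 1 - (p ∘ σ) i := by simp [hy]
  have hx' i : x i * (p ∘ σ) i = 1 - (p ∘ σ) (σ.symm i) := by simp [hx]
  calc
    _ = (∏ i, (p ∘ σ) i) * packingSum σ.symm t y x := by
      rw [← Equiv.prod_comp σ p]
      rfl
    _ = runSum σ.symm t ((fun i => p i - 1) ∘ σ) ((fun i => -(t * (1 - p i) ^ 2)) ∘ σ) :=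
      prod_mul_packingSum hy' hx' t
    _ = _ := by rw [runSum_symm, runSum_comp, prod_mul_packingSum hx hy]

theorem packingSum_symm {σ : Equiv.Perm α} {p x y : α → R}
    (hp : ∀ i, p i ∈ nonZeroDivisors R) (hx : ∀ i, x i * p (σ i) = 1 - p i)
    (hy : ∀ i, y i * p i = 1 - p (σ i)) :
    packingSum σ.symm X (C ∘ y) (C ∘ x) = packingSum σ X (C ∘ x) (C ∘ y) := by
  have packingSum_eq := prod_mul_packingSum_symm (σ := σ) (p := C ∘ p) (x := C ∘ x) (y := C ∘ y)
    (fun i => by simp [← map_mul, hx]) (fun i => by simp [← map_mul, hy]) X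
  ext k
  have hprod : ∏ i, p i ∈ nonZeroDivisors R := prod_mem fun i _ => hp i
  have coeff_eq := congrArg (coeff · k) packingSum_eq
  simp only [Function.comp_apply, ← map_prod, coeff_C_mul] at coeff_eq
  exact (mul_cancel_left_mem_nonZeroDivisors hprod).1 coeff_eq

end WeightedSums

section Pentagram

variable {n : ℕ} {R : Type*} [CommRing R]

lemma allRes_eq_univ [NeZero n] : allRes n = univ := by
  ext i
  simpa [allRes] using ⟨i.val, ZMod.val_lt i, ZMod.natCast_zmod_val i⟩

lemma one_ne_zero_and_two_ne_zero_of_three_le (hn : 3 ≤ n) :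
    (1 : ZMod n) ≠ 0 ∧ (2 : ZMod n) ≠ 0 := by
  constructor
  · exact_mod_cast mt (ZMod.natCast_eq_zero_iff 1 n).1 (Nat.not_dvd_of_pos_of_lt one_pos (by lia))
  · exact_mod_cast mt (ZMod.natCast_eq_zero_iff 2 n).1 (Nat.not_dvd_of_pos_of_lt two_pos (by lia))

lemma admissibleO_iff (hn : 3 ≤ n) {S T : Finset (ZMod n)} :
    AdmissibleO S T ↔ IsPacking (Equiv.addRight 1) S T := by
  obtain ⟨h₁, h₂⟩ := one_ne_zero_and_two_ne_zero_of_three_le hn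
  rw [isPacking_iff_forall_notMem (by simpa) (by simpa [add_assoc, one_add_one_eq_two])]
  simp only [AdmissibleO, Equiv.addRight_symm, Equiv.coe_addRight, add_assoc, ← sub_eq_add_neg,
    sub_sub, one_add_one_eq_two]

lemma admissibleE_iff (hn : 3 ≤ n) {S T : Finset (ZMod n)} :
    AdmissibleE S T ↔ IsPacking (Equiv.addRight 1).symm S T := by
  obtain ⟨h₁, h₂⟩ := one_ne_zero_and_two_ne_zero_of_three_le hn
  rw [isPacking_iff_forall_notMem (by simpa)
    (by simpa [add_assoc, ← neg_add, one_add_one_eq_two])]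
  simp only [AdmissibleE, Equiv.addRight_symm, Equiv.coe_addRight, ← sub_eq_add_neg,
    sub_sub, one_add_one_eq_two, mem_insert, mem_singleton]
  grind

lemma Opoly_eq_coeff [NeZero n] (hn : 3 ≤ n) (x y : ZMod n → R) (k : ℕ) :
    Opoly x y k = (packingSum (Equiv.addRight 1) X (C ∘ x) (C ∘ y)).coeff k := by
  simp only [coeff_packingSum, Opoly, Xmon, allRes_eq_univ, powerset_univ, admissibleO_iff hn,
    Equiv.coe_addRight]

lemma Epoly_eq_coeff [NeZero n] (hn : 3 ≤ n) (x y : ZMod n → R) (k : ℕ) :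
    Epoly x y k = (packingSum (Equiv.addRight 1).symm X (C ∘ y) (C ∘ x)).coeff k := by
  have Ymon_eq (j : ZMod n) : Ymon x y j = y j * x j * y (j - 1) := by
    rw [Ymon]
    ring
  simp only [coeff_packingSum, Epoly, allRes_eq_univ, powerset_univ, admissibleE_iff hn,
    Equiv.addRight_symm, Equiv.coe_addRight, ← sub_eq_add_neg, Ymon_eq]

theorem inscribed_Opoly_eq_Epoly_general (hn : 3 ≤ n) {p x y : ZMod n → R}
    (hp : ∀ i, p i ∈ nonZeroDivisors R) (hx : ∀ i, x i * p (i + 1) = 1 - p i)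
    (hy : ∀ i, y i * p i = 1 - p (i + 1)) (k : ℕ) : Opoly x y k = Epoly x y k := by
  have : NeZero n := ⟨by lia⟩
  rw [Opoly_eq_coeff hn, Epoly_eq_coeff hn, packingSum_symm hp hx hy]

end Pentagram

/-- **Main theorem.**  For a twisted `n`-gon inscribed in a conic, with cross-ratio
coordinates `p_i ≠ 0` and corner invariants `x_i = (1 - p_i)/p_{i+1}`,
`y_i = (1 - p_{i+1})/p_i`, one has `O_k = E_k` for every `1 ≤ k ≤ ⌊n/2⌋`. -/
theorem inscribed_Opoly_eq_Epoly (n : ℕ) (hn : 5 ≤ n) (p : ZMod n → ℝ)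
    (hp : ∀ i, p i ≠ 0) (x y : ZMod n → ℝ)
    (hx : ∀ i, x i = (1 - p i) / p (i + 1))
    (hy : ∀ i, y i = (1 - p (i + 1)) / p i)
    (k : ℕ) (hk1 : 1 ≤ k) (hk2 : k ≤ n / 2) :
    Opoly x y k = Epoly x y k :=
  inscribed_Opoly_eq_Epoly_general (by lia) (fun i => mem_nonZeroDivisors_of_ne_zero (hp i))
    (fun i => by rw [hx, div_mul_cancel₀ _ (hp _)])
    (fun i => by rw [hy, div_mul_cancel₀ _ (hp _)]) k

end
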